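/- arXiv:1404.5240 — 2 statements merged into one kernel-verified Lean document; each statement's English description precedes it below -/
import Mathlib

section
/- With the Fock-module operators e_j, f_j defined below and with u = 0, the operator [e_0, f_0] = e_0∘f_0 − f_0∘e_0 on F equals −1/(h1·h2) times the identity operator of F. -/
noncomputable section

/-- A partition: a weakly decreasing function `ℕ → ℕ` (0-indexed rows) that takes the
value `0` somewhere (hence eventually). -/
def IsPtn (f : ℕ → ℕ) : Prop := Antitone f ∧ ∃ N, f N = 0

/-- The type of partitions. -/
abbrev Ptn : Type := {f : ℕ → ℕ // IsPtn f}

/-- The Fock space: the free `ℂ`-vector space with basis indexed by all partitions. -/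
abbrev FockSp : Type := Ptn →₀ ℂ

namespace Fock

/-- The number of nonzero parts of a partition (the first 0-indexed row equal to zero). -/
def plen (lam : Ptn) : ℕ := Nat.find lam.2.2

/-- `|λ| = Σ_i λ_i`. -/
def psize (lam : Ptn) : ℕ := ∑ i ∈ Finset.range (plen lam), lam.1 i

/-- A box may be added in (0-indexed) row `i`, i.e. `λ + 1_i` is again a partition. -/
def Addable (lam : Ptn) (i : ℕ) : Prop := ∀ p, p < i → lam.1 i < lam.1 p

instance (lam : Ptn) (i : ℕ) : Decidable (Addable lam i) :=
  inferInstanceAs (Decidable (∀ p, p < i → lam.1 i < lam.1 p))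

/-- A box may be removed from (0-indexed) row `i`, i.e. `λ − 1_i` is again a partition. -/
def Removable (lam : Ptn) (i : ℕ) : Prop := lam.1 (i + 1) < lam.1 i

instance (lam : Ptn) (i : ℕ) : Decidable (Removable lam i) :=
  inferInstanceAs (Decidable (lam.1 (i + 1) < lam.1 i))

/-- The partition `λ + 1_i`. -/
def addBox (lam : Ptn) (i : ℕ) (h : Addable lam i) : Ptn :=
  ⟨Function.update lam.1 i (lam.1 i + 1), by
    constructor
    · intro a b hab
      rw [Function.update_apply, Function.update_apply]
      split_ifs with hb ha ha
      · exact le_rfl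
      · have : a < i := lt_of_le_of_ne (hb ▸ hab) ha
        exact h a this
      · have : lam.1 b ≤ lam.1 i := lam.2.1 (ha ▸ hab)
        omega
      · exact lam.2.1 hab
    · obtain ⟨N, hN⟩ := lam.2.2
      refine ⟨max N (i + 1), ?_⟩
      rw [Function.update_apply, if_neg (by omega : ¬ max N (i + 1) = i)]
      have := lam.2.1 (le_max_left N (i + 1))
      omega⟩

/-- The partition `λ − 1_i`. -/
def remBox (lam : Ptn) (i : ℕ) (h : Removable lam i) : Ptn :=
  ⟨Function.update lam.1 i (lam.1 i - 1), by
    constructor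
    · intro a b hab
      rw [Function.update_apply, Function.update_apply]
      split_ifs with hb ha ha
      · exact le_rfl
      · have : lam.1 i ≤ lam.1 a := lam.2.1 (le_of_lt (lt_of_le_of_ne (hb ▸ hab) ha))
        omega
      · have h1 : lam.1 b ≤ lam.1 (i + 1) := lam.2.1 (by omega : i + 1 ≤ b)
        have h2 : lam.1 (i + 1) < lam.1 i := h
        omega
      · exact lam.2.1 hab
    · obtain ⟨N, hN⟩ := lam.2.2
      refine ⟨max N (i + 1), ?_⟩
      rw [Function.update_apply, if_neg (by omega : ¬ max N (i + 1) = i)]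
      have := lam.2.1 (le_max_left N (i + 1))
      omega⟩

variable (h1 h2 u : ℂ)

/-- The coefficient of `|λ + 1_i⟩` in `e_j |λ⟩` (0-indexed row `i`). -/
def ecoef (j : ℕ) (lam : Ptn) (i : ℕ) : ℂ :=
  (1 / h1) *
  (∏ p ∈ Finset.range i,
    (((((lam.1 i : ℂ) - (lam.1 p : ℂ)) * h1 + (((i : ℂ) - (p : ℂ)) - 1) * h2)
        * (((lam.1 i : ℂ) - (lam.1 p : ℂ) + 1) * h1 + (((i : ℂ) - (p : ℂ)) + 1) * h2))
      / ((((lam.1 i : ℂ) - (lam.1 p : ℂ)) * h1 + ((i : ℂ) - (p : ℂ)) * h2)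
        * (((lam.1 i : ℂ) - (lam.1 p : ℂ) + 1) * h1 + ((i : ℂ) - (p : ℂ)) * h2)))) *
  ((lam.1 i : ℂ) * h1 + (i : ℂ) * h2 + u) ^ j

/-- The coefficient of `|λ − 1_i⟩` in `f_j |λ⟩` (0-indexed row `i`). -/
def fcoef (j : ℕ) (lam : Ptn) (i : ℕ) : ℂ :=
  (-(1 / h1)) *
  ((((lam.1 (i+1) : ℂ) - (lam.1 i : ℂ)) * h1)
      / ((((lam.1 (i+1) : ℂ) - (lam.1 i : ℂ)) + 1) * h1 + h2)) *
  (∏ p ∈ Finset.Icc (i + 1) (plen lam),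
    (((((lam.1 p : ℂ) - (lam.1 i : ℂ) + 1) * h1 + (((p : ℂ) - (i : ℂ)) + 1) * h2)
        * (((lam.1 (p+1) : ℂ) - (lam.1 i : ℂ)) * h1 + ((p : ℂ) - (i : ℂ)) * h2))
      / ((((lam.1 (p+1) : ℂ) - (lam.1 i : ℂ) + 1) * h1 + (((p : ℂ) - (i : ℂ)) + 1) * h2)
        * (((lam.1 p : ℂ) - (lam.1 i : ℂ)) * h1 + ((p : ℂ) - (i : ℂ)) * h2)))) *
  (((lam.1 i : ℂ) - 1) * h1 + (i : ℂ) * h2 + u) ^ j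

/-- `e_j |λ⟩`, a finite sum over the rows where a box can be added (all of which lie in
`{0, …, plen λ}`). -/
def evec (j : ℕ) (lam : Ptn) : FockSp :=
  ∑ i ∈ Finset.range (plen lam + 1),
    if h : Addable lam i then Finsupp.single (addBox lam i h) (ecoef h1 h2 u j lam i) else 0

/-- `f_j |λ⟩`, a finite sum over the rows where a box can be removed (all of which lie in
`{0, …, plen λ − 1}`). -/
def fvec (j : ℕ) (lam : Ptn) : FockSp :=
  ∑ i ∈ Finset.range (plen lam),
    if h : Removable lam i then Finsupp.single (remBox lam i h) (fcoef h1 h2 u j lam i) else 0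

/-- The Fock-module operator `e_j`. -/
def eOp (j : ℕ) : Module.End ℂ FockSp :=
  Finsupp.lsum ℂ fun lam => LinearMap.toSpanSingleton ℂ FockSp (evec h1 h2 u j lam)

/-- The Fock-module operator `f_j`. -/
def fOp (j : ℕ) : Module.End ℂ FockSp :=
  Finsupp.lsum ℂ fun lam => LinearMap.toSpanSingleton ℂ FockSp (fvec h1 h2 u j lam)

/-- `ψ_k := [e_k, f_0]`. -/
def psiOp (k : ℕ) : Module.End ℂ FockSp :=
  eOp h1 h2 u k * fOp h1 h2 u 0 - fOp h1 h2 u 0 * eOp h1 h2 u k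

end Fock


open Fock

namespace Fock

section Interpolation

open Polynomial

/-- The residue theorem for `∏ (z - w i) / ∏ (z - v i)`: the residues at the simple poles `v i`
sum to the coefficient of `1 / z` at infinity. -/
theorem sum_prod_sub_div_prod_sub {ι F : Type*} [Fintype ι] [DecidableEq ι] [Field F]
    (v w : ι → F) (hv : Function.Injective v) :
    ∑ i, (∏ j, (v i - w j)) / ∏ j, (if j = i then 1 else v i - v j) = ∑ i, (v i - w i) := by
  rcases isEmpty_or_nonempty ι with hι | hι
  · simp
  have hcard : 0 < (Finset.univ : Finset ι).card := Finset.card_pos.2 Finset.univ_nonempty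
  set P : F[X] := ∏ i, (X - C (w i))
  set Q : F[X] := ∏ i, (X - C (v i))
  have hP : P.Monic := monic_prod_of_monic _ _ fun i _ => monic_X_sub_C _
  have hQ : Q.Monic := monic_prod_of_monic _ _ fun i _ => monic_X_sub_C _
  have hPd : P.degree = (Finset.univ : Finset ι).card := by simp [P, degree_prod]
  have hQd : Q.degree = (Finset.univ : Finset ι).card := by simp [Q, degree_prod]
  have hdeg : (P - Q).degree < (Finset.univ : Finset ι).card := by
    rw [← hPd]
    exact degree_sub_lt_left (hPd.trans hQd.symm) hP.ne_zero
      (hP.leadingCoeff.trans hQ.leadingCoeff.symm)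
  have key := Lagrange.coeff_eq_sum (hv.injOn (s := ((Finset.univ : Finset ι) : Set ι))) hdeg
  rw [coeff_sub, prod_X_sub_C_coeff_card_pred _ _ hcard,
    prod_X_sub_C_coeff_card_pred _ _ hcard] at key
  rw [Finset.sum_sub_distrib, show ∑ i, v i - ∑ i, w i = -∑ i, w i - -∑ i, v i by ring, key]
  refine Finset.sum_congr rfl fun i _ => ?_
  congr 1
  · have hQi : Q.eval (v i) = 0 := by
      rw [eval_prod]
      exact Finset.prod_eq_zero (Finset.mem_univ i) (by simp)
    rw [eval_sub, hQi, sub_zero, eval_prod]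
    simp
  · rw [← Finset.mul_prod_erase _ _ (Finset.mem_univ i), if_pos rfl, one_mul]
    exact Finset.prod_congr rfl fun j hj => if_neg (Finset.ne_of_mem_erase hj)

end Interpolation

section Combinatorics

theorem prod_eq_mul_prod_ite {ι F : Type*} [DecidableEq ι] [CommMonoid F] (s : Finset ι)
    (g : ι → F) {i : ι} (hi : i ∈ s) :
    ∏ p ∈ s, g p = g i * ∏ p ∈ s, (if p = i then 1 else g p) := by
  rw [← Finset.mul_prod_erase _ _ hi, ← Finset.mul_prod_erase s (fun p => ite _ _ _) hi,
    if_pos rfl, one_mul]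
  congr 1
  exact Finset.prod_congr rfl fun j hj => (if_neg (Finset.ne_of_mem_erase hj)).symm

theorem prod_range_mul_prod_Ioo {F : Type*} [CommMonoid F] (g : ℕ → F) {i M : ℕ} (hi : i < M) :
    (∏ p ∈ Finset.range i, g p) * ∏ p ∈ Finset.Ioo i M, g p =
      ∏ p ∈ Finset.range M, (if p = i then 1 else g p) := by
  rw [← Finset.prod_range_mul_prod_Ico _ hi.le, ← Finset.Ioo_insert_left hi,
    Finset.prod_insert (by simp), if_pos rfl, one_mul]
  congr 1
  · exact Finset.prod_congr rfl fun j hj => (if_neg (Finset.mem_range.1 hj).ne).symm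
  · exact Finset.prod_congr rfl fun j hj => (if_neg (Finset.mem_Ioo.1 hj).1.ne').symm

end Combinatorics

section Sequences

variable (h1 h2 : ℂ)

/-- The pairing factor of two rows whose positions differ by `w`. -/
def phi (w : ℂ) : ℂ := ((w + h1 + h2) * (w - h2)) / ((w + h1) * w)

/-- The factor contributed by all the empty rows from a row at distance `w` on. -/
def tailFactor (w : ℂ) : ℂ := (w - h2) / (w + h1)

theorem phi_neg_sub (w : ℂ) : phi h1 h2 (-w - h1) = phi h1 h2 w := by
  unfold phi
  congr 1 <;> ring

theorem sum_residues_eq {M : ℕ} (x : ℕ → ℂ) (hh1 : h1 ≠ 0) (hh2 : h2 ≠ 0) (h12 : h1 + h2 ≠ 0)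
    (hlast : x (M + 1) = x M + h2)
    (hx : ∀ p q, p ≠ q → x p ≠ x q) (hx' : ∀ p q, x p ≠ x q + h1) :
    ∑ i ∈ Finset.range (M + 1),
      ((∏ p ∈ Finset.range (M + 1), (if p = i then 1 else phi h1 h2 (x p - x i)))
          * tailFactor h1 h2 (x (M + 1) - x i)
        - (∏ p ∈ Finset.range (M + 1), (if p = i then 1 else phi h1 h2 (x i - x p)))
          * tailFactor h1 h2 (x (M + 1) - x i - h1)) = h1 / h2 := by
  let v : Option (Fin (M + 1) ⊕ Fin (M + 1)) → ℂ := fun o =>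
    o.elim (x (M + 1) + h1) (Sum.elim (fun p => x p) (fun p => x p + h1))
  let w : Option (Fin (M + 1) ⊕ Fin (M + 1)) → ℂ := fun o =>
    o.elim (x (M + 1) - h2) (Sum.elim (fun p => x p - h2) (fun p => x p + h1 + h2))
  have hv : Function.Injective v := by
    have hxi : ∀ p q, x p = x q → p = q := fun p q h => by
      by_contra hne
      exact hx p q hne h
    rintro (_ | p | p) (_ | q | q) h <;> simp only [v, Option.elim, Sum.elim_inl, Sum.elim_inr] at h
    · rfl
    · exact absurd h.symm (hx' _ _)
    · have := hxi _ _ (add_right_cancel h)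
      have := q.2
      omega
    · exact absurd h (hx' _ _)
    · rw [Fin.ext (hxi _ _ h)]
    · exact absurd h (hx' _ _)
    · have := hxi _ _ (add_right_cancel h)
      have := p.2
      omega
    · exact absurd h.symm (hx' _ _)
    · rw [Fin.ext (hxi _ _ (add_right_cancel h))]
  have key := sum_prod_sub_div_prod_sub v w hv
  simp only [Fintype.sum_option, Fintype.prod_option, Fintype.sum_sum_type,
    Fintype.prod_sum_type, v, w, Option.elim, Sum.elim_inl, Sum.elim_inr, Option.some.injEq,
    Sum.inl.injEq, Sum.inr.injEq, reduceCtorEq, if_false, if_true] at key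
  have hnone : ∏ p : Fin (M + 1), (x (M + 1) + h1 - (x p + h1 + h2)) = 0 :=
    Finset.prod_eq_zero (Finset.mem_univ (Fin.last M)) (by simp [hlast]; ring)
  have hl : ∀ i : Fin (M + 1),
      (x i - (x (M + 1) - h2)) *
          ((∏ p : Fin (M + 1), (x i - (x p - h2))) * ∏ p : Fin (M + 1), (x i - (x p + h1 + h2))) /
        ((x i - (x (M + 1) + h1)) * ((∏ p : Fin (M + 1), if p = i then 1 else x i - x p) *
          ∏ p : Fin (M + 1), (x i - (x p + h1)))) =
      h2 * (h1 + h2) / h1 *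
        ((∏ p : Fin (M + 1), (if (p : ℕ) = i then 1 else phi h1 h2 (x p - x i)))
          * tailFactor h1 h2 (x (M + 1) - x i)) := by
    intro i
    rw [← Finset.prod_mul_distrib, ← Finset.prod_mul_distrib, mul_div_mul_comm,
      ← Finset.prod_div_distrib, prod_eq_mul_prod_ite _ _ (Finset.mem_univ i)]
    have h3 : ∀ p : Fin (M + 1), (if p = i then (1 : ℂ) else
        (x i - (x p - h2)) * (x i - (x p + h1 + h2)) /
          ((if p = i then 1 else x i - x p) * (x i - (x p + h1)))) =
        if (p : ℕ) = i then 1 else phi h1 h2 (x p - x i) := by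
      intro p
      by_cases hp : p = i
      · simp [hp]
      · rw [if_neg hp, if_neg hp, if_neg (fun h => hp (Fin.ext h)), phi]
        congr 1 <;> ring
    simp only [h3, if_true]
    have h4 : tailFactor h1 h2 (x (M + 1) - x i) =
        (x i - (x (M + 1) - h2)) / (x i - (x (M + 1) + h1)) := by
      rw [tailFactor, ← neg_div_neg_eq]
      congr 1 <;> ring
    have h5 : (x i - (x i - h2)) * (x i - (x i + h1 + h2)) / (1 * (x i - (x i + h1))) =
        h2 * (h1 + h2) / h1 := by
      rw [← neg_div_neg_eq]
      congr 1 <;> ring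
    rw [h4, h5]
    ring
  have hr : ∀ i : Fin (M + 1),
      (x i + h1 - (x (M + 1) - h2)) *
          ((∏ p : Fin (M + 1), (x i + h1 - (x p - h2))) *
            ∏ p : Fin (M + 1), (x i + h1 - (x p + h1 + h2))) /
        ((x i + h1 - (x (M + 1) + h1)) * ((∏ p : Fin (M + 1), (x i + h1 - x p)) *
          ∏ p : Fin (M + 1), if p = i then 1 else x i + h1 - (x p + h1))) =
      -(h2 * (h1 + h2) / h1 *
        ((∏ p : Fin (M + 1), (if (p : ℕ) = i then 1 else phi h1 h2 (x i - x p)))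
          * tailFactor h1 h2 (x (M + 1) - x i - h1))) := by
    intro i
    rw [← Finset.prod_mul_distrib, ← Finset.prod_mul_distrib, mul_div_mul_comm,
      ← Finset.prod_div_distrib, prod_eq_mul_prod_ite _ _ (Finset.mem_univ i)]
    have h3 : ∀ p : Fin (M + 1), (if p = i then (1 : ℂ) else
        (x i + h1 - (x p - h2)) * (x i + h1 - (x p + h1 + h2)) /
          ((x i + h1 - x p) * (if p = i then 1 else x i + h1 - (x p + h1)))) =
        if (p : ℕ) = i then 1 else phi h1 h2 (x i - x p) := by
      intro p
      by_cases hp : p = i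
      · simp [hp]
      · rw [if_neg hp, if_neg hp, if_neg (fun h => hp (Fin.ext h)), phi]
        congr 1 <;> ring
    simp only [h3, if_true]
    have h4 : tailFactor h1 h2 (x (M + 1) - x i - h1) =
        (x i + h1 - (x (M + 1) - h2)) / (x i + h1 - (x (M + 1) + h1)) := by
      rw [tailFactor, ← neg_div_neg_eq]
      congr 1 <;> ring
    have h5 : (x i + h1 - (x i - h2)) * (x i + h1 - (x i + h1 + h2)) / ((x i + h1 - x i) * 1) =
        -(h2 * (h1 + h2) / h1) := by
      rw [← neg_div]
      congr 1 <;> ring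
    rw [h4, h5]
    ring
  have hsum : ∑ p : Fin (M + 1), (x p - (x p - h2)) +
      ∑ p : Fin (M + 1), (x p + h1 - (x p + h1 + h2)) = 0 := by
    rw [← Finset.sum_add_distrib]
    exact Finset.sum_eq_zero fun p _ => by ring
  rw [hnone, hsum, Finset.sum_congr rfl fun i _ => hl i, Finset.sum_congr rfl fun i _ => hr i,
    Finset.sum_neg_distrib, ← Finset.mul_sum, ← Finset.mul_sum] at key
  simp only [Finset.sum_range, Finset.prod_range, Finset.sum_sub_distrib]
  have h6 : h2 * (h1 + h2) / h1 ≠ 0 := div_ne_zero (mul_ne_zero hh2 h12) hh1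
  refine mul_left_cancel₀ h6 ?_
  rw [mul_sub]
  have h7 : h2 * (h1 + h2) / h1 * (h1 / h2) = h1 + h2 := by field_simp
  rw [h7]
  linear_combination key

/-- The position `a p * h1 + p * h2` of the end of row `p`. -/
def rowPos (a : ℕ → ℤ) (p : ℕ) : ℂ := (a p : ℂ) * h1 + (p : ℂ) * h2

theorem rowPos_add_single (a : ℕ → ℤ) (i p : ℕ) :
    rowPos h1 h2 (a + Pi.single i 1) p = rowPos h1 h2 a p + if p = i then h1 else 0 := by
  unfold rowPos
  by_cases hp : p = i
  · subst hp
    simp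
    ring
  · simp [hp]

theorem rowPos_sub_single (a : ℕ → ℤ) (i p : ℕ) :
    rowPos h1 h2 (a - Pi.single i 1) p = rowPos h1 h2 a p - if p = i then h1 else 0 := by
  unfold rowPos
  by_cases hp : p = i
  · subst hp
    simp
    ring
  · simp [hp]

/-- The coefficient of `a + 1_i` in `e_0 a`, for an arbitrary integer sequence `a`. -/
def eSeq (a : ℕ → ℤ) (i : ℕ) : ℂ :=
  (1 / h1) * ∏ p ∈ Finset.range i, phi h1 h2 (rowPos h1 h2 a i - rowPos h1 h2 a p)

/-- The coefficient of `a - 1_i` in `f_0 a`, for an integer sequence `a` that vanishes from the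
index `M - 1` on. -/
def fSeq (M : ℕ) (a : ℕ → ℤ) (i : ℕ) : ℂ :=
  -(1 / h1) * ((∏ p ∈ Finset.Ioo i M, phi h1 h2 (rowPos h1 h2 a p - rowPos h1 h2 a i)) *
    tailFactor h1 h2 (rowPos h1 h2 a M - rowPos h1 h2 a i))

theorem fSeq_mul_eSeq_comm {M : ℕ} (a : ℕ → ℤ) {i k : ℕ} (hik : i ≠ k) (hk : k < M) :
    fSeq h1 h2 M a i * eSeq h1 h2 (a - Pi.single i 1) k =
      eSeq h1 h2 a k * fSeq h1 h2 M (a + Pi.single k 1) i := by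
  simp only [eSeq, fSeq, rowPos_add_single, rowPos_sub_single, if_neg hik, if_neg hik.symm,
    if_neg hk.ne', sub_zero, add_zero]
  rcases lt_or_gt_of_ne hik with h | h
  · have hk' : k ∈ Finset.Ioo i M := Finset.mem_Ioo.2 ⟨h, hk⟩
    have hi' : i ∈ Finset.range k := Finset.mem_range.2 h
    rw [← Finset.mul_prod_erase _ _ hk', ← Finset.mul_prod_erase _ _ hk',
      ← Finset.mul_prod_erase _ _ hi', ← Finset.mul_prod_erase _ _ hi', if_pos rfl, if_pos rfl]
    rw [Finset.prod_congr rfl (fun p hp => by rw [if_neg (Finset.ne_of_mem_erase hp), sub_zero] :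
      ∀ p ∈ (Finset.range k).erase i, _ = phi h1 h2 (rowPos h1 h2 a k - rowPos h1 h2 a p)),
      Finset.prod_congr rfl (fun p hp => by rw [if_neg (Finset.ne_of_mem_erase hp), add_zero] :
      ∀ p ∈ (Finset.Ioo i M).erase k, phi h1 h2 (rowPos h1 h2 a p + (if p = k then h1 else 0) - _)
        = phi h1 h2 (rowPos h1 h2 a p - rowPos h1 h2 a i)),
      sub_sub_eq_add_sub, add_comm (rowPos h1 h2 a k) h1]
    ring
  · rw [Finset.prod_congr rfl (fun p hp => by
        rw [if_neg ((Finset.mem_range.1 hp).trans h).ne, sub_zero] :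
      ∀ p ∈ Finset.range k, _ = phi h1 h2 (rowPos h1 h2 a k - rowPos h1 h2 a p)),
      Finset.prod_congr rfl (fun p hp => by
        rw [if_neg (h.trans (Finset.mem_Ioo.1 hp).1).ne', add_zero] :
      ∀ p ∈ Finset.Ioo i M, phi h1 h2 (rowPos h1 h2 a p + (if p = k then h1 else 0) - _)
        = phi h1 h2 (rowPos h1 h2 a p - rowPos h1 h2 a i))]
    ring

theorem fSeq_mul_eSeq_self {M : ℕ} (a : ℕ → ℤ) {i : ℕ} (hi : i < M) :
    fSeq h1 h2 M a i * eSeq h1 h2 (a - Pi.single i 1) i = -(1 / h1 ^ 2) *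
      ((∏ p ∈ Finset.range M,
          (if p = i then 1 else phi h1 h2 (rowPos h1 h2 a p - rowPos h1 h2 a i))) *
        tailFactor h1 h2 (rowPos h1 h2 a M - rowPos h1 h2 a i)) := by
  rw [← prod_range_mul_prod_Ioo _ hi]
  simp only [eSeq, fSeq, rowPos_sub_single, if_true]
  have h : ∀ p ∈ Finset.range i,
      phi h1 h2 (rowPos h1 h2 a i - h1 - (rowPos h1 h2 a p - if p = i then h1 else 0)) =
        phi h1 h2 (rowPos h1 h2 a p - rowPos h1 h2 a i) := by
    intro p hp
    rw [if_neg (Finset.mem_range.1 hp).ne, ← phi_neg_sub]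
    congr 1
    ring
  rw [Finset.prod_congr rfl h]
  ring

theorem eSeq_mul_fSeq_self {M : ℕ} (a : ℕ → ℤ) {i : ℕ} (hi : i < M) :
    eSeq h1 h2 a i * fSeq h1 h2 M (a + Pi.single i 1) i = -(1 / h1 ^ 2) *
      ((∏ p ∈ Finset.range M,
          (if p = i then 1 else phi h1 h2 (rowPos h1 h2 a i - rowPos h1 h2 a p))) *
        tailFactor h1 h2 (rowPos h1 h2 a M - rowPos h1 h2 a i - h1)) := by
  rw [← prod_range_mul_prod_Ioo _ hi]
  simp only [eSeq, fSeq, rowPos_add_single, if_true, if_neg hi.ne', add_zero]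
  have h : ∀ p ∈ Finset.Ioo i M,
      phi h1 h2 (rowPos h1 h2 a p + (if p = i then h1 else 0) - (rowPos h1 h2 a i + h1)) =
        phi h1 h2 (rowPos h1 h2 a i - rowPos h1 h2 a p) := by
    intro p hp
    rw [if_neg (Finset.mem_Ioo.1 hp).1.ne', ← phi_neg_sub]
    congr 1
    ring
  rw [Finset.prod_congr rfl h, sub_add_eq_sub_sub]
  ring

theorem sum_diagonal_eq (hgen : ∀ a b : ℤ, ¬(a = 0 ∧ b = 0) → (a : ℂ) * h1 + (b : ℂ) * h2 ≠ 0)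
    {M : ℕ} (a : ℕ → ℤ) (ha : a M = 0) (ha' : a (M + 1) = 0) :
    ∑ i ∈ Finset.range (M + 1), (fSeq h1 h2 (M + 1) a i * eSeq h1 h2 (a - Pi.single i 1) i -
      eSeq h1 h2 a i * fSeq h1 h2 (M + 1) (a + Pi.single i 1) i) = -(1 / (h1 * h2)) := by
  have hh1 : h1 ≠ 0 := by simpa using hgen 1 0 (by simp)
  have hh2 : h2 ≠ 0 := by simpa using hgen 0 1 (by simp)
  have h12 : h1 + h2 ≠ 0 := by simpa using hgen 1 1 (by simp)
  have key := sum_residues_eq h1 h2 (M := M) (rowPos h1 h2 a) hh1 hh2 h12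
    (by simp [rowPos, ha, ha']; ring)
    (fun p q hpq h => hgen (a p - a q) (p - q) (by omega) (by
      unfold rowPos at h
      push_cast
      linear_combination h))
    (fun p q h => hgen (a p - a q - 1) (p - q) (by
        rintro ⟨h3, h4⟩
        obtain rfl : p = q := by omega
        simp at h3) (by
      unfold rowPos at h
      push_cast
      linear_combination h))
  rw [Finset.sum_congr rfl fun i hi => by
    rw [fSeq_mul_eSeq_self _ _ _ (Finset.mem_range.1 hi),
      eSeq_mul_fSeq_self _ _ _ (Finset.mem_range.1 hi), ← mul_sub],
    ← Finset.mul_sum, key]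
  field_simp

end Sequences

section Embedding

variable (h1 h2 : ℂ)

/-- The rows of a partition, as an integer sequence. -/
def rows (lam : Ptn) : ℕ → ℤ := fun p => (lam.1 p : ℤ)

theorem rows_injective : Function.Injective rows := fun _ _ h =>
  Subtype.ext (funext fun p => Int.ofNat_injective (congrFun h p))

theorem rows_addBox (lam : Ptn) (i : ℕ) (h : Addable lam i) :
    rows (addBox lam i h) = rows lam + Pi.single i 1 := by
  funext p
  by_cases hp : p = i
  · subst hp
    simp [rows, addBox]
  · simp [rows, addBox, hp]

theorem rows_remBox (lam : Ptn) (i : ℕ) (h : Removable lam i) :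
    rows (remBox lam i h) = rows lam - Pi.single i 1 := by
  funext p
  by_cases hp : p = i
  · subst hp
    have : lam.1 (p + 1) < lam.1 p := h
    simp [rows, remBox]
    omega
  · simp [rows, remBox, hp]

theorem eq_zero_of_plen_le {lam : Ptn} {p : ℕ} (h : plen lam ≤ p) : lam.1 p = 0 :=
  Nat.le_zero.1 ((lam.2.1 h).trans (Nat.find_spec lam.2.2).le)

theorem plen_le_of_eq_zero {lam : Ptn} {p : ℕ} (h : lam.1 p = 0) : plen lam ≤ p :=
  Nat.find_min' lam.2.2 h

theorem plen_remBox_le (lam : Ptn) (i : ℕ) (h : Removable lam i) :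
    plen (remBox lam i h) ≤ plen lam := by
  refine plen_le_of_eq_zero ?_
  have := eq_zero_of_plen_le (le_refl (plen lam))
  simp only [remBox, Function.update_apply]
  split_ifs with hi
  · rw [← hi, this]
  · exact this

theorem le_plen_of_addable {lam : Ptn} {i : ℕ} (h : Addable lam i) : i ≤ plen lam := by
  by_contra hi
  have := h (plen lam) (by omega)
  rw [eq_zero_of_plen_le le_rfl] at this
  omega

theorem plen_addBox_le (lam : Ptn) (i : ℕ) (h : Addable lam i) :
    plen (addBox lam i h) ≤ plen lam + 1 := by
  refine plen_le_of_eq_zero ?_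
  have := le_plen_of_addable h
  simp only [addBox, Function.update_apply]
  rw [if_neg (by omega), eq_zero_of_plen_le (by omega)]

theorem evec_eq_sum_range (u : ℂ) (j : ℕ) {lam : Ptn} {M : ℕ} (hM : plen lam < M) :
    evec h1 h2 u j lam = ∑ i ∈ Finset.range M,
      if h : Addable lam i then Finsupp.single (addBox lam i h) (ecoef h1 h2 u j lam i) else 0 := by
  refine Finset.sum_subset (Finset.range_subset_range.2 hM) fun i _ hi => dif_neg fun h => hi ?_
  exact Finset.mem_range.2 (Nat.lt_succ_of_le (le_plen_of_addable h))

theorem fvec_eq_sum_range (u : ℂ) (j : ℕ) {lam : Ptn} {M : ℕ} (hM : plen lam < M) :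
    fvec h1 h2 u j lam = ∑ i ∈ Finset.range M,
      if h : Removable lam i then Finsupp.single (remBox lam i h) (fcoef h1 h2 u j lam i)
      else 0 := by
  refine Finset.sum_subset (Finset.range_subset_range.2 hM.le) fun i _ hi => dif_neg fun h => ?_
  have h3 : lam.1 (i + 1) < lam.1 i := h
  rw [eq_zero_of_plen_le (p := i) (by simpa using hi)] at h3
  omega

theorem ecoef_zero_eq_eSeq (lam : Ptn) (i : ℕ) :
    ecoef h1 h2 0 0 lam i = eSeq h1 h2 (rows lam) i := by
  rw [ecoef, eSeq, pow_zero, mul_one]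
  congr 1
  refine Finset.prod_congr rfl fun p _ => ?_
  simp only [phi, rowPos, rows, Int.cast_natCast]
  congr 1 <;> ring

theorem fcoef_prod_eq (x : ℕ → ℂ) (i n : ℕ) :
    tailFactor h1 h2 (x (i + 1) - x i) * ∏ p ∈ Finset.Ico (i + 1) (i + 1 + n),
      (((x p - x i + h1 + h2) * (x (p + 1) - x i - h2)) /
        ((x (p + 1) - x i + h1) * (x p - x i))) =
      (∏ p ∈ Finset.Ico (i + 1) (i + 1 + n), phi h1 h2 (x p - x i)) *
        tailFactor h1 h2 (x (i + 1 + n) - x i) := by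
  induction n with
  | zero => simp
  | succ n ih =>
    rw [← add_assoc, Finset.prod_Ico_succ_top (by omega), Finset.prod_Ico_succ_top (by omega),
      ← mul_assoc, ih, mul_assoc, mul_assoc]
    simp only [phi, tailFactor, div_mul_div_comm]
    congr 2 <;> ring

theorem fSeq_succ (hgen : ∀ a b : ℤ, ¬(a = 0 ∧ b = 0) → (a : ℂ) * h1 + (b : ℂ) * h2 ≠ 0)
    {M : ℕ} (a : ℕ → ℤ) {i : ℕ} (hi : i < M) (ha : a M = 0) (ha' : a (M + 1) = 0) :
    fSeq h1 h2 (M + 1) a i = fSeq h1 h2 M a i := by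
  have hM : rowPos h1 h2 a (M + 1) = rowPos h1 h2 a M + h2 := by simp [rowPos, ha, ha']; ring
  have h3 : rowPos h1 h2 a M - rowPos h1 h2 a i ≠ 0 := fun h => hgen (a M - a i) (M - i)
    (by omega) (by
      unfold rowPos at h
      push_cast
      linear_combination h)
  have h4 : rowPos h1 h2 a M - rowPos h1 h2 a i + h1 + h2 ≠ 0 := fun h =>
    hgen (a M - a i + 1) (M - i + 1) (by omega) (by
      unfold rowPos at h
      push_cast
      linear_combination h)
  have h5 : Finset.Ioo i (M + 1) = insert M (Finset.Ioo i M) := by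
    ext p
    simp only [Finset.mem_Ioo, Finset.mem_insert]
    omega
  rw [fSeq, fSeq, h5, Finset.prod_insert (by simp), hM]
  set w := rowPos h1 h2 a M - rowPos h1 h2 a i
  have h6 : phi h1 h2 w * tailFactor h1 h2 (rowPos h1 h2 a M + h2 - rowPos h1 h2 a i) =
      tailFactor h1 h2 w := by
    rw [show rowPos h1 h2 a M + h2 - rowPos h1 h2 a i = w + h2 by simp only [w]; ring]
    have h7 : w + h2 + h1 ≠ 0 := by rwa [add_right_comm]
    simp only [phi, tailFactor]
    rw [show w + h2 - h2 = w by ring, show w + h2 + h1 = w + h1 + h2 by ring,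
      div_mul_div_comm, show (w + h1 + h2) * (w - h2) * w = (w - h2) * ((w + h1 + h2) * w) by ring,
      show (w + h1) * w * (w + h1 + h2) = (w + h1) * ((w + h1 + h2) * w) by ring,
      mul_div_mul_right _ _ (mul_ne_zero h4 h3)]
  rw [← h6]
  ring

theorem fcoef_zero_eq_fSeq
    (hgen : ∀ a b : ℤ, ¬(a = 0 ∧ b = 0) → (a : ℂ) * h1 + (b : ℂ) * h2 ≠ 0)
    (lam : Ptn) {i M : ℕ} (hi : i < plen lam) (hM : plen lam < M) :
    fcoef h1 h2 0 0 lam i = fSeq h1 h2 M (rows lam) i := by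
  have hzero : ∀ p, plen lam ≤ p → rows lam p = 0 := fun p hp => by
    simp [rows, eq_zero_of_plen_le hp]
  induction M, hM using Nat.le_induction with
  | base =>
    obtain ⟨n, hn⟩ : ∃ n, plen lam + 1 = i + 1 + n := ⟨plen lam - i, by omega⟩
    have h3 : Finset.Icc (i + 1) (plen lam) = Finset.Ico (i + 1) (i + 1 + n) := by
      ext p
      simp only [Finset.mem_Icc, Finset.mem_Ico]
      omega
    have h4 : Finset.Ioo i (i + 1 + n) = Finset.Ico (i + 1) (i + 1 + n) := by
      ext p
      simp only [Finset.mem_Ioo, Finset.mem_Ico]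
      omega
    rw [fcoef, pow_zero, mul_one, fSeq, Nat.succ_eq_add_one, hn, h3, h4, ← fcoef_prod_eq,
      mul_assoc]
    congr 2
    · simp only [tailFactor, rowPos, rows, Int.cast_natCast]
      push_cast
      congr 1 <;> ring
    · refine Finset.prod_congr rfl fun p _ => ?_
      simp only [rowPos, rows, Int.cast_natCast]
      push_cast
      congr 1 <;> ring
  | succ m hm ih =>
    rw [ih, fSeq_succ h1 h2 hgen _ (by omega) (hzero _ (by omega)) (hzero _ (by omega))]

theorem eSeq_eq_zero {lam : Ptn} {i : ℕ} (h : ¬Addable lam i) :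
    eSeq h1 h2 (rows lam) i = 0 := by
  obtain ⟨p, hp, hle⟩ : ∃ p, p < i ∧ lam.1 p ≤ lam.1 i := by
    simpa [Addable] using h
  have h3 : lam.1 (i - 1) = lam.1 i :=
    le_antisymm ((lam.2.1 (by omega : p ≤ i - 1)).trans hle) (lam.2.1 (by omega))
  have h4 : ((i - 1 : ℕ) : ℂ) = i - 1 := by
    rw [Nat.cast_sub (by omega), Nat.cast_one]
  rw [eSeq, Finset.prod_eq_zero (i := i - 1) (Finset.mem_range.2 (by omega)), mul_zero]
  simp only [phi, rowPos, rows, h3, h4]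
  rw [show ∀ y : ℂ, y + i * h2 - (y + (i - 1) * h2) - h2 = 0 from fun y => by ring]
  simp

theorem fSeq_eq_zero {lam : Ptn} {i M : ℕ} (hi : i < M) (h : ¬Removable lam i) :
    fSeq h1 h2 M (rows lam) i = 0 := by
  have h3 : lam.1 (i + 1) = lam.1 i := le_antisymm (lam.2.1 (by omega)) (not_lt.1 h)
  have h4 : rowPos h1 h2 (rows lam) (i + 1) - rowPos h1 h2 (rows lam) i = h2 := by
    simp only [rowPos, rows, h3]
    push_cast
    ring
  rcases Nat.lt_or_ge (i + 1) M with hM | hM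
  · rw [fSeq, Finset.prod_eq_zero (i := i + 1) (Finset.mem_Ioo.2 ⟨by omega, hM⟩), zero_mul,
      mul_zero]
    simp [h4, phi]
  · obtain rfl : M = i + 1 := by omega
    simp [fSeq, h4, tailFactor]

/-- The embedding of the Fock space into the free vector space on all integer sequences. -/
def fockEmb : FockSp →ₗ[ℂ] ((ℕ → ℤ) →₀ ℂ) := Finsupp.lmapDomain ℂ ℂ rows

theorem fockEmb_single (lam : Ptn) (c : ℂ) :
    fockEmb (Finsupp.single lam c) = Finsupp.single (rows lam) c := by
  simp [fockEmb]

theorem fockEmb_injective : Function.Injective fockEmb :=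
  Finsupp.mapDomain_injective rows_injective

theorem fockEmb_evec {lam : Ptn} {M : ℕ} (hM : plen lam < M) :
    fockEmb (evec h1 h2 0 0 lam) = ∑ i ∈ Finset.range M,
      Finsupp.single (rows lam + Pi.single i 1) (eSeq h1 h2 (rows lam) i) := by
  rw [evec_eq_sum_range h1 h2 0 0 hM, map_sum]
  refine Finset.sum_congr rfl fun i _ => ?_
  split_ifs with h
  · rw [fockEmb_single, rows_addBox, ecoef_zero_eq_eSeq]
  · rw [eSeq_eq_zero h1 h2 h, map_zero, Finsupp.single_zero]

theorem lt_plen_of_removable {lam : Ptn} {i : ℕ} (h : Removable lam i) : i < plen lam := by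
  by_contra hi
  have h3 : lam.1 (i + 1) < lam.1 i := h
  rw [eq_zero_of_plen_le (p := i) (by omega)] at h3
  omega

theorem fockEmb_fvec
    (hgen : ∀ a b : ℤ, ¬(a = 0 ∧ b = 0) → (a : ℂ) * h1 + (b : ℂ) * h2 ≠ 0)
    {lam : Ptn} {M : ℕ} (hM : plen lam < M) :
    fockEmb (fvec h1 h2 0 0 lam) = ∑ i ∈ Finset.range M,
      Finsupp.single (rows lam - Pi.single i 1) (fSeq h1 h2 M (rows lam) i) := by
  rw [fvec_eq_sum_range h1 h2 0 0 hM, map_sum]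
  refine Finset.sum_congr rfl fun i hi => ?_
  split_ifs with h
  · rw [fockEmb_single, rows_remBox, fcoef_zero_eq_fSeq h1 h2 hgen lam (lt_plen_of_removable h) hM]
  · rw [fSeq_eq_zero h1 h2 (Finset.mem_range.1 hi) h, map_zero, Finsupp.single_zero]

theorem eOp_single (u : ℂ) (j : ℕ) (lam : Ptn) (c : ℂ) :
    eOp h1 h2 u j (Finsupp.single lam c) = c • evec h1 h2 u j lam := by
  simp [eOp]

theorem fOp_single (u : ℂ) (j : ℕ) (lam : Ptn) (c : ℂ) :
    fOp h1 h2 u j (Finsupp.single lam c) = c • fvec h1 h2 u j lam := by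
  simp [fOp]

theorem fockEmb_eOp_fvec
    (hgen : ∀ a b : ℤ, ¬(a = 0 ∧ b = 0) → (a : ℂ) * h1 + (b : ℂ) * h2 ≠ 0)
    {lam : Ptn} {M : ℕ} (hM : plen lam < M) :
    fockEmb (eOp h1 h2 0 0 (fvec h1 h2 0 0 lam)) =
      ∑ i ∈ Finset.range M, ∑ k ∈ Finset.range M,
        Finsupp.single (rows lam - Pi.single i 1 + Pi.single k 1)
          (fSeq h1 h2 M (rows lam) i * eSeq h1 h2 (rows lam - Pi.single i 1) k) := by
  rw [fvec_eq_sum_range h1 h2 0 0 hM, map_sum, map_sum]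
  refine Finset.sum_congr rfl fun i hi => ?_
  split_ifs with h
  · rw [eOp_single, map_smul, fockEmb_evec h1 h2 ((plen_remBox_le lam i h).trans_lt hM),
      rows_remBox, fcoef_zero_eq_fSeq h1 h2 hgen lam (lt_plen_of_removable h) hM, Finset.smul_sum]
    simp only [Finsupp.smul_single, smul_eq_mul]
  · simp [fSeq_eq_zero h1 h2 (Finset.mem_range.1 hi) h]

theorem fockEmb_fOp_evec
    (hgen : ∀ a b : ℤ, ¬(a = 0 ∧ b = 0) → (a : ℂ) * h1 + (b : ℂ) * h2 ≠ 0)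
    {lam : Ptn} {M : ℕ} (hM : plen lam + 1 < M) :
    fockEmb (fOp h1 h2 0 0 (evec h1 h2 0 0 lam)) =
      ∑ i ∈ Finset.range M, ∑ k ∈ Finset.range M,
        Finsupp.single (rows lam + Pi.single k 1 - Pi.single i 1)
          (eSeq h1 h2 (rows lam) k * fSeq h1 h2 M (rows lam + Pi.single k 1) i) := by
  rw [Finset.sum_comm, evec_eq_sum_range h1 h2 0 0 (by omega : plen lam < M), map_sum, map_sum]
  refine Finset.sum_congr rfl fun k _ => ?_
  split_ifs with h
  · rw [fOp_single, map_smul, fockEmb_fvec h1 h2 hgen ((plen_addBox_le lam k h).trans_lt hM),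
      rows_addBox, ecoef_zero_eq_eSeq, Finset.smul_sum]
    simp only [Finsupp.smul_single, smul_eq_mul]
  · simp [eSeq_eq_zero h1 h2 h]

end Embedding

end Fock

/-- For the Fock module of the affine Yangian of `gl_1` (with `u = 0`
and generic `h1, h2`), the operator `[e_0, f_0]` equals `−1/(h1·h2)` times the identity. -/
theorem fock_e0_f0_commutator (h1 h2 : ℂ)
    (hgen : ∀ a b : ℤ, ¬(a = 0 ∧ b = 0) → (a : ℂ) * h1 + (b : ℂ) * h2 ≠ 0) :
    eOp h1 h2 0 0 * fOp h1 h2 0 0 - fOp h1 h2 0 0 * eOp h1 h2 0 0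
      = (-(1 / (h1 * h2))) • (1 : Module.End ℂ FockSp) := by
  refine Finsupp.lhom_ext fun lam c => fockEmb_injective ?_
  have hzero : ∀ p, plen lam ≤ p → rows lam p = 0 := fun p hp => by
    simp [rows, eq_zero_of_plen_le hp]
  rw [LinearMap.sub_apply, Module.End.mul_apply, Module.End.mul_apply, eOp_single, fOp_single,
    map_smul, map_smul, ← smul_sub, map_smul, map_sub,
    fockEmb_eOp_fvec h1 h2 hgen (by omega : plen lam < plen lam + 1 + 1),
    fockEmb_fOp_evec h1 h2 hgen (by omega : plen lam + 1 < plen lam + 1 + 1),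
    ← Finset.sum_sub_distrib]
  have hdiag : ∀ i ∈ Finset.range (plen lam + 1 + 1),
      (∑ k ∈ Finset.range (plen lam + 1 + 1),
        Finsupp.single (rows lam - Pi.single i 1 + Pi.single k 1)
          (fSeq h1 h2 (plen lam + 1 + 1) (rows lam) i *
            eSeq h1 h2 (rows lam - Pi.single i 1) k)) -
      (∑ k ∈ Finset.range (plen lam + 1 + 1),
        Finsupp.single (rows lam + Pi.single k 1 - Pi.single i 1)
          (eSeq h1 h2 (rows lam) k *
            fSeq h1 h2 (plen lam + 1 + 1) (rows lam + Pi.single k 1) i)) =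
      Finsupp.single (rows lam) (fSeq h1 h2 (plen lam + 1 + 1) (rows lam) i *
            eSeq h1 h2 (rows lam - Pi.single i 1) i - eSeq h1 h2 (rows lam) i *
            fSeq h1 h2 (plen lam + 1 + 1) (rows lam + Pi.single i 1) i) := by
    intro i hi
    rw [← Finset.sum_sub_distrib, Finset.sum_eq_single_of_mem i hi]
    · rw [sub_add_cancel, add_sub_cancel_right, Finsupp.single_sub]
    · intro k hk hki
      rw [fSeq_mul_eSeq_comm h1 h2 _ hki.symm (Finset.mem_range.1 hk),
        sub_add_eq_add_sub, sub_self]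
  rw [Finset.sum_congr rfl hdiag, ← Finsupp.single_finsetSum,
    sum_diagonal_eq h1 h2 hgen _ (hzero _ (by omega)) (hzero _ (by omega)),
    LinearMap.smul_apply, Module.End.one_apply, map_smul, fockEmb_single, Finsupp.smul_single,
    Finsupp.smul_single, smul_eq_mul, smul_eq_mul, mul_comm]

end
end

section
/- Let L be a Lie algebra over ℂ, and let q ∈ ℂ be nonzero and not a root of unity (q^n ≠ 1 for every integer n ≥ 1). Suppose (e_i)_{i∈ℤ} is a family of elements of L satisfying, for all i, j ∈ ℤ, the relation [e_{i+3}, e_j] − (1+q+q⁻¹)[e_{i+2}, e_{j+1}] + (1+q+q⁻¹)[e_{i+1}, e_{j+2}] − [e_i, e_{j+3}] = 0. Then for all i, j ∈ ℤ with i + j ≠ 0 one has (q^{i+j} − 1)·[e_i, e_j] = (q^j − q^i)·[e_0, e_{i+j}], and for all i ∈ ℤ one has (q² − 1)·[e_i, e_{−i}] = (q^{i+1} − q^{1−i})·[e_1, e_{−1}]. -/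
/-- A two-sided geometric sequence in a vector space. -/
theorem eq_zpow_smul_of_forall_succ {K V : Type*} [Field K] [AddCommGroup V] [Module K V]
    {r : K} (hr : r ≠ 0) {d : ℤ → V} (h : ∀ i, d (i + 1) = r • d i) (i : ℤ) :
    d i = r ^ i • d 0 := by
  induction i using Int.induction_on with
  | zero => simp
  | succ n ih => rw [h, ih, smul_smul, zpow_add_one₀ hr, mul_comm]
  | pred n ih =>
    have h' := h (-n - 1)
    rw [sub_add_cancel, ih] at h'
    rw [zpow_sub_one₀ hr, mul_comm, mul_smul, h', inv_smul_smul₀ hr]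

/-- A sequence satisfying the recurrence with characteristic polynomial
`(X - 1) (X - q) (X - q⁻¹)` and antisymmetric under `i ↦ N - i` is proportional to
`q ^ i - q ^ (N - i)`. -/
theorem exists_eq_smul_of_recurrence_of_antisymm {K V : Type*} [Field K] [NeZero (2 : K)]
    [AddCommGroup V] [Module K V] {q : K} (hq : q ≠ 0) (hq2 : q ^ 2 ≠ 1) {N : ℤ} {a : ℤ → V}
    (hrec : ∀ i, a (i + 3) - (1 + q + q⁻¹) • a (i + 2) + (1 + q + q⁻¹) • a (i + 1) - a i = 0)
    (hanti : ∀ i, a (N - i) = -a i) :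
    ∃ v : V, ∀ i, a i = (q ^ i - q ^ (N - i)) • v := by
  have hqq : q - q⁻¹ ≠ 0 := fun h => hq2 (by field_simp at h; linear_combination h)
  have hconst := eq_zpow_smul_of_forall_succ (K := K) one_ne_zero
    (d := fun i => a (i + 2) - (q + q⁻¹) • a (i + 1) + a i) fun i => by
      have h := hrec i
      simp only [show i + 1 + 2 = i + 3 by ring, show i + 1 + 1 = i + 2 by ring]
      linear_combination (norm := module) h
  simp only [one_zpow, one_smul] at hconst
  have hsecond : ∀ i, a (i + 2) - (q + q⁻¹) • a (i + 1) + a i = 0 := fun i => by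
    have h := (hconst (N - (i + 2))).trans (hconst i).symm
    rw [show N - (i + 2) + 2 = N - i by ring, show N - (i + 2) + 1 = N - (i + 1) by ring,
      hanti, hanti, hanti] at h
    refine (smul_eq_zero_iff_right (two_ne_zero (α := K))).mp ?_
    linear_combination (norm := module) -h
  have hd := eq_zpow_smul_of_forall_succ hq (d := fun i => a (i + 1) - q⁻¹ • a i) fun i => by
    have h := hsecond i
    simp only [add_assoc, one_add_one_eq_two, smul_sub, smul_inv_smul₀ hq]
    linear_combination (norm := module) h
  have hf := eq_zpow_smul_of_forall_succ (inv_ne_zero hq) (d := fun i => a (i + 1) - q • a i)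
    fun i => by
      have h := hsecond i
      simp only [add_assoc, one_add_one_eq_two, smul_sub, inv_smul_smul₀ hq]
      linear_combination (norm := module) h
  simp only [inv_zpow'] at hd hf
  generalize a (0 + 1) - q⁻¹ • a 0 = x at hd
  generalize a (0 + 1) - q • a 0 = y at hf
  have ha : ∀ i, (q - q⁻¹) • a i = q ^ i • x - q ^ (-i) • y := fun i => by
    rw [← hd, ← hf]; module
  have hxy : ∀ i, (q ^ i + q ^ (N - i)) • (x - q ^ (-N) • y) = 0 := fun i => by
    have h := ha (N - i)
    rw [hanti, smul_neg, ha] at h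
    have e₁ : q ^ i * q ^ (-N) = q ^ (-(N - i)) := by rw [← zpow_add₀ hq]; congr 1; ring
    have e₂ : q ^ (N - i) * q ^ (-N) = q ^ (-i) := by rw [← zpow_add₀ hq]; congr 1; ring
    rw [smul_sub, smul_smul, add_mul, e₁, e₂]
    linear_combination (norm := module) -h
  have hy : x = q ^ (-N) • y := by
    refine sub_eq_zero.mp (by_contra fun hne => hqq ?_)
    have h₀ := (smul_eq_zero.mp (hxy 0)).resolve_right hne
    have h₁ := (smul_eq_zero.mp (hxy 1)).resolve_right hne
    rw [zpow_zero, sub_zero] at h₀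
    rw [zpow_one, zpow_sub_one₀ hq] at h₁
    linear_combination h₁ - q⁻¹ * h₀
  have hy' : y = q ^ N • x := by
    rw [hy, smul_smul, ← zpow_add₀ hq, add_neg_cancel, zpow_zero, one_smul]
  refine ⟨(q - q⁻¹)⁻¹ • x, fun i => ?_⟩
  rw [smul_comm, eq_inv_smul_iff₀ hqq, ha, hy', smul_smul, ← zpow_add₀ hq, ← sub_smul,
    neg_add_eq_sub]

/-- Let `L` be a Lie algebra over `ℂ` and `q ∈ ℂ` nonzero, not a root of
unity.  If a family `(e_i)_{i∈ℤ}` in `L` satisfies the quadratic relation (u1), then all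
degree-2 brackets are determined by `[e_0,e_{i+j}]` (when `i+j ≠ 0`) resp. `[e_1,e_{−1}]`. -/
theorem degree_two_brackets_determined {L : Type*} [LieRing L] [LieAlgebra ℂ L]
    (q : ℂ) (hq : q ≠ 0) (hroot : ∀ n : ℕ, 1 ≤ n → q ^ n ≠ 1) (e : ℤ → L)
    (hrel : ∀ i j : ℤ,
      ⁅e (i + 3), e j⁆ - (1 + q + q⁻¹) • ⁅e (i + 2), e (j + 1)⁆
        + (1 + q + q⁻¹) • ⁅e (i + 1), e (j + 2)⁆ - ⁅e i, e (j + 3)⁆ = 0) :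
    (∀ i j : ℤ, i + j ≠ 0 →
        (q ^ (i + j) - 1) • ⁅e i, e j⁆ = (q ^ j - q ^ i) • ⁅e 0, e (i + j)⁆) ∧
    (∀ i : ℤ,
        (q ^ 2 - 1) • ⁅e i, e (-i)⁆ = (q ^ (i + 1) - q ^ (1 - i)) • ⁅e 1, e (-1)⁆) := by
  have hsol (N : ℤ) : ∃ v : L, ∀ i, ⁅e i, e (N - i)⁆ = (q ^ i - q ^ (N - i)) • v := by
    refine exists_eq_smul_of_recurrence_of_antisymm hq (hroot 2 one_le_two) (fun i => ?_)
      fun i => ?_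
    · have h := hrel i (N - (i + 3))
      rwa [show N - (i + 3) + 1 = N - (i + 2) by ring,
        show N - (i + 3) + 2 = N - (i + 1) by ring, show N - (i + 3) + 3 = N - i by ring] at h
    · rw [sub_sub_cancel, lie_skew]
  constructor
  · intro i j _
    obtain ⟨v, hv⟩ := hsol (i + j)
    have hi := hv i
    have h₀ := hv 0
    rw [add_sub_cancel_left] at hi
    rw [sub_zero, zpow_zero] at h₀
    rw [hi, h₀, smul_smul, smul_smul, zpow_add₀ hq]
    congr 1
    ring
  · intro i
    obtain ⟨v, hv⟩ := hsol 0
    have hi := hv i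
    have h₁ := hv 1
    rw [zero_sub] at hi h₁
    rw [hi, h₁, smul_smul, smul_smul, zpow_add₀ hq, zpow_sub₀ hq, zpow_neg, zpow_neg, zpow_one]
    congr 1
    field_simp
end
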